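/- arXiv:2501.17016 — 2 statements merged into one kernel-verified Lean document; each statement's English description precedes it below -/
import Mathlib

section
/- Under Assumption (A): (1) Γ ⊆ Γ_∞; (2) Γ_∞ is an open convex cone, invariant under permutations of the coordinates, and contains Γₙ; (3) either f_∞ ≡ +∞ on Γ_∞, or f_∞ is finite at every point of Γ_∞ and is a concave function on Γ_∞. -/
open Filter

/-- Assumption (A) from the paper: `Γ ⊆ ℝⁿ` is an open convex symmetric cone with
`Γₙ ⊆ Γ ⊆ Γ₁`, and `f : Γ → (0,∞)` is smooth, symmetric, concave, with positive partial
derivatives, vanishing at the boundary of `Γ`, and `f(Rλ) → +∞` as `R → +∞`. -/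
structure AssumptionA (n : ℕ) (Γ : Set (Fin n → ℝ)) (f : (Fin n → ℝ) → ℝ) : Prop where
  isOpen : IsOpen Γ
  convex : Convex ℝ Γ
  cone : ∀ x ∈ Γ, ∀ t : ℝ, 0 < t → t • x ∈ Γ
  perm_invariant : ∀ x ∈ Γ, ∀ σ : Equiv.Perm (Fin n), (fun i => x (σ i)) ∈ Γ
  orthant_subset : {x : Fin n → ℝ | ∀ i, 0 < x i} ⊆ Γ
  subset_halfspace : Γ ⊆ {x : Fin n → ℝ | 0 < ∑ i, x i}
  f_pos : ∀ x ∈ Γ, 0 < f x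
  f_smooth : ContDiffOn ℝ (⊤ : ℕ∞) f Γ
  f_perm_invariant : ∀ x ∈ Γ, ∀ σ : Equiv.Perm (Fin n), f (fun i => x (σ i)) = f x
  f_concave : ConcaveOn ℝ Γ f
  f_deriv_pos : ∀ x ∈ Γ, ∀ i : Fin n, 0 < fderiv ℝ f x (Pi.single i 1)
  f_boundary_zero : ∀ x₀ ∈ frontier Γ, Tendsto f (nhdsWithin x₀ Γ) (nhds 0)
  f_proper : ∀ x ∈ Γ, Tendsto (fun R : ℝ => f (R • x)) atTop atTop

/-- `Γ_∞`: the set of `λ ∈ ℝⁿ` such that for every `i`, replacing the `i`-th coordinate by any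
sufficiently large `R` lands in `Γ`. -/
def GammaInfty (n : ℕ) (Γ : Set (Fin n → ℝ)) : Set (Fin n → ℝ) :=
  {x | ∀ i : Fin n, ∃ R₀ : ℝ, ∀ R ≥ R₀, Function.update x i R ∈ Γ}

/-- `f_{∞,i}(λ) = lim_{R→+∞} f(λ₁,…,λ_{i−1},R,λ_{i+1},…,λₙ)`, realized as a limsup in `EReal`
(the limit exists in `(0,+∞]` since `f` is increasing in `λᵢ`). -/
noncomputable def fInftyi (n : ℕ) (f : (Fin n → ℝ) → ℝ) (i : Fin n) (x : Fin n → ℝ) : EReal :=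
  Filter.limsup (fun R : ℝ => ((f (Function.update x i R) : ℝ) : EReal)) Filter.atTop

/-- `f_∞(λ) = min_{1 ≤ i ≤ n} f_{∞,i}(λ)`, with values in `(0,+∞]`. -/
noncomputable def fInfty (n : ℕ) (f : (Fin n → ℝ) → ℝ) (x : Fin n → ℝ) : EReal :=
  ⨅ i : Fin n, fInftyi n f i x

theorem aux_orth {n : ℕ} {Γ : Set (Fin n → ℝ)} {f : (Fin n → ℝ) → ℝ}
    (hA : AssumptionA n Γ f) {x v : Fin n → ℝ} (hx : x ∈ Γ) (hv : ∀ i, 0 ≤ v i) : x + v ∈ Γ := by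
  have hadd : ∀ u ∈ Γ, ∀ w ∈ Γ, u + w ∈ Γ := by
    intro u hu w hw
    have h := hA.convex hu hw (a := 1/2) (b := 1/2) (by norm_num) (by norm_num) (by norm_num)
    have h2 := hA.cone _ h 2 (by norm_num)
    convert h2 using 1
    ext j
    simp
    ring
  have hc : Continuous (fun ε : ℝ => (fun j => x j - ε : Fin n → ℝ)) := by fun_prop
  have h0 : ∀ᶠ ε in nhds (0 : ℝ), (fun j => x j - ε : Fin n → ℝ) ∈ Γ :=
    hc.continuousAt.eventually_mem (hA.isOpen.mem_nhds (by simpa using hx))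
  obtain ⟨δ, hδ, hb⟩ := Metric.eventually_nhds_iff.1 h0
  have h1 := hb (y := δ / 2) (by
    rw [Real.dist_eq, sub_zero, abs_of_pos (by positivity)]
    linarith)
  have h2 : (fun j => v j + δ / 2 : Fin n → ℝ) ∈ Γ :=
    hA.orthant_subset (fun j => by have := hv j; positivity)
  convert hadd _ h1 _ h2 using 1
  ext j
  simp

theorem aux_mono {n : ℕ} {Γ : Set (Fin n → ℝ)} {f : (Fin n → ℝ) → ℝ}
    (hA : AssumptionA n Γ f) {x v : Fin n → ℝ} (hx : x ∈ Γ) (hv : ∀ i, 0 ≤ v i) :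
    f x ≤ f (x + v) := by
  have hpos := hA.f_pos x hx
  refine le_of_forall_pos_le_add fun ε hε => ?_
  set s := ε / (f x + ε) with hs
  have hs0 : 0 < s := by positivity
  have hs1 : s ≤ 1 := by
    rw [hs, div_le_one (by positivity)]; linarith
  have hy : x + s⁻¹ • v ∈ Γ := aux_orth hA hx (fun i => by
    have := hv i
    simp only [Pi.smul_apply, smul_eq_mul]; positivity)
  have h := hA.f_concave.2 hx hy (show 0 ≤ 1 - s by linarith) hs0.le (by ring)
  have he : (1 - s) • x + s • (x + s⁻¹ • v) = x + v := by
    ext j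
    simp
    field_simp
    ring
  rw [he] at h
  have hp := hA.f_pos _ hy
  have h3 : 0 < s * f (x + s⁻¹ • v) := by positivity
  have h4 : s * f x ≤ ε := by
    rw [hs, div_mul_eq_mul_div, div_le_iff₀ (by positivity)]
    nlinarith
  simp only [smul_eq_mul] at h
  linarith

theorem aux_upd {n : ℕ} (x : Fin n → ℝ) (i : Fin n) {R S : ℝ} :
    Function.update x i S = Function.update x i R + Pi.single i (S - R) := by
  ext j
  by_cases h : j = i
  · subst h; simp
  · simp [h]

theorem aux_single {n : ℕ} (i : Fin n) {r : ℝ} (hr : 0 ≤ r) (j : Fin n) :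
    0 ≤ (Pi.single i r : Fin n → ℝ) j := by
  by_cases h : j = i
  · subst h; simpa
  · simp [h]

theorem aux_up {n : ℕ} {Γ : Set (Fin n → ℝ)} {f : (Fin n → ℝ) → ℝ}
    (hA : AssumptionA n Γ f) {x : Fin n → ℝ} {i : Fin n} {R S : ℝ}
    (h : Function.update x i R ∈ Γ) (hRS : R ≤ S) :
    Function.update x i S ∈ Γ ∧ f (Function.update x i R) ≤ f (Function.update x i S) := by
  rw [aux_upd x i (R := R) (S := S)]
  exact ⟨aux_orth hA h (aux_single i (by linarith)), aux_mono hA h (aux_single i (by linarith))⟩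

theorem aux_iff {n : ℕ} {Γ : Set (Fin n → ℝ)} {f : (Fin n → ℝ) → ℝ}
    (hA : AssumptionA n Γ f) {x : Fin n → ℝ} :
    x ∈ GammaInfty n Γ ↔ ∀ i, ∃ R : ℝ, Function.update x i R ∈ Γ := by
  constructor
  · intro h i
    obtain ⟨R, hR⟩ := h i
    exact ⟨R, hR R le_rfl⟩
  · intro h i
    obtain ⟨R, hR⟩ := h i
    exact ⟨R, fun S hS => (aux_up hA hR hS).1⟩

theorem aux_comb {n : ℕ} (x y : Fin n → ℝ) (i : Fin n) (a b R S : ℝ) :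
    Function.update (a • x + b • y) i (a * R + b * S) =
      a • Function.update x i R + b • Function.update y i S := by
  ext j
  by_cases h : j = i
  · subst h; simp
  · simp [h]

theorem aux_convex {n : ℕ} {Γ : Set (Fin n → ℝ)} {f : (Fin n → ℝ) → ℝ}
    (hA : AssumptionA n Γ f) : Convex ℝ (GammaInfty n Γ) := by
  intro x hx y hy a b ha hb hab
  rw [aux_iff hA] at hx hy ⊢
  intro i
  obtain ⟨R, hR⟩ := hx i
  obtain ⟨S, hS⟩ := hy i
  exact ⟨a * R + b * S, by rw [aux_comb]; exact hA.convex hR hS ha hb hab⟩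

theorem aux_open {n : ℕ} {Γ : Set (Fin n → ℝ)} {f : (Fin n → ℝ) → ℝ}
    (hA : AssumptionA n Γ f) : IsOpen (GammaInfty n Γ) := by
  have : GammaInfty n Γ = ⋂ i : Fin n, ⋃ R : ℝ, (fun x => Function.update x i R) ⁻¹' Γ := by
    ext x
    rw [aux_iff hA]
    simp
  rw [this]
  refine isOpen_iInter_of_finite fun i => isOpen_iUnion fun R => hA.isOpen.preimage ?_
  exact continuous_id.update i continuous_const

theorem aux_ev {n : ℕ} {Γ : Set (Fin n → ℝ)} {f : (Fin n → ℝ) → ℝ}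
    (hA : AssumptionA n Γ f) {x : Fin n → ℝ} (hx : x ∈ GammaInfty n Γ) {c : ℝ}
    (hc : (c : EReal) < fInfty n f x) (i : Fin n) :
    ∀ᶠ R : ℝ in atTop, Function.update x i R ∈ Γ ∧ c ≤ f (Function.update x i R) := by
  have h1 : (c : EReal) < fInftyi n f i x := hc.trans_le (iInf_le _ i)
  have h2 := frequently_lt_of_lt_limsup (by isBoundedDefault) h1
  obtain ⟨R₀, hR₀⟩ := hx i
  obtain ⟨R, hR, hR'⟩ := (h2.and_eventually (eventually_ge_atTop R₀)).exists
  filter_upwards [eventually_ge_atTop R] with S hS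
  have := aux_up hA (hR₀ R hR') hS
  exact ⟨this.1, (EReal.coe_lt_coe_iff.1 hR).le.trans this.2⟩

theorem aux_le {n : ℕ} {f : (Fin n → ℝ) → ℝ} {x : Fin n → ℝ} {c : ℝ}
    (h : ∀ i, ∀ᶠ R : ℝ in atTop, c ≤ f (Function.update x i R)) :
    (c : EReal) ≤ fInfty n f x := by
  refine le_iInf fun i => ?_
  refine le_limsup_of_frequently_le ?_ (by isBoundedDefault)
  exact (h i).frequently.mono fun R hR => EReal.coe_le_coe_iff.2 hR

theorem aux_key {n : ℕ} {Γ : Set (Fin n → ℝ)} {f : (Fin n → ℝ) → ℝ}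
    (hA : AssumptionA n Γ f) {x y : Fin n → ℝ} (hx : x ∈ GammaInfty n Γ)
    (hy : y ∈ GammaInfty n Γ) {c d a b : ℝ} (ha : 0 ≤ a) (hb : 0 ≤ b) (hab : a + b = 1)
    (hc : (c : EReal) < fInfty n f x) (hd : (d : EReal) < fInfty n f y) :
    ((a * c + b * d : ℝ) : EReal) ≤ fInfty n f (a • x + b • y) := by
  refine aux_le fun i => ?_
  filter_upwards [aux_ev hA hx hc i, aux_ev hA hy hd i] with R h1 h2
  have h := hA.f_concave.2 h1.1 h2.1 ha hb hab
  rw [← aux_comb, ← add_mul, hab, one_mul] at h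
  refine le_trans ?_ h
  simp only [smul_eq_mul]
  exact add_le_add (mul_le_mul_of_nonneg_left h1.2 ha) (mul_le_mul_of_nonneg_left h2.2 hb)

theorem aux_nonneg {n : ℕ} {Γ : Set (Fin n → ℝ)} {f : (Fin n → ℝ) → ℝ}
    (hA : AssumptionA n Γ f) {x : Fin n → ℝ} (hx : x ∈ GammaInfty n Γ) :
    ((0 : ℝ) : EReal) ≤ fInfty n f x := by
  refine aux_le fun i => ?_
  obtain ⟨R₀, hR₀⟩ := hx i
  filter_upwards [eventually_ge_atTop R₀] with S hS
  exact (hA.f_pos _ (hR₀ S hS)).le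

theorem aux_top {n : ℕ} {Γ : Set (Fin n → ℝ)} {f : (Fin n → ℝ) → ℝ}
    (hA : AssumptionA n Γ f) {x y : Fin n → ℝ} (hx : x ∈ GammaInfty n Γ)
    (hy : y ∈ GammaInfty n Γ) (hT : fInfty n f x = ⊤) : fInfty n f y = ⊤ := by
  have hc : Continuous (fun t : ℝ => y + t • (y - x)) := by fun_prop
  have h0 : ∀ᶠ t in nhds (0 : ℝ), y + t • (y - x) ∈ GammaInfty n Γ :=
    hc.continuousAt.eventually_mem ((aux_open hA).mem_nhds (by simpa using hy))
  obtain ⟨δ, hδ, hb⟩ := Metric.eventually_nhds_iff.1 h0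
  set t := δ / 2 with ht
  have ht0 : 0 < t := by positivity
  have hz := hb (y := t) (by
    rw [Real.dist_eq, sub_zero, abs_of_pos (by positivity)]
    linarith)
  rw [EReal.eq_top_iff_forall_lt]
  intro M
  have h := aux_key hA hx hz (a := t / (1 + t)) (b := 1 / (1 + t))
    (c := (M + 2) / (t / (1 + t))) (d := -1) (by positivity) (by positivity)
    (by field_simp; ring) (by rw [hT]; exact EReal.coe_lt_top _)
    (lt_of_lt_of_le (EReal.coe_lt_coe_iff.2 (by norm_num)) (aux_nonneg hA hz))
  have he : (t / (1 + t)) • x + (1 / (1 + t)) • (y + t • (y - x)) = y := by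
    ext j
    simp
    field_simp
    ring
  rw [he] at h
  refine lt_of_lt_of_le (EReal.coe_lt_coe_iff.2 ?_) h
  have h1 : t / (1 + t) * ((M + 2) / (t / (1 + t))) = M + 2 :=
    mul_div_cancel₀ _ (by positivity)
  have h2 : 1 / (1 + t) ≤ 1 := by
    rw [div_le_one (by positivity)]; linarith
  rw [h1]
  linarith

/-- Lemma 2.5 of the paper, first part: `Γ ⊆ Γ_∞`; `Γ_∞` is an open convex symmetric cone
containing the positive orthant `Γₙ`; and either `f_∞ ≡ +∞` on `Γ_∞`, or `f_∞` is finite at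
every point of `Γ_∞` and is a concave function on `Γ_∞`. -/
theorem stmt_3 (n : ℕ) (Γ : Set (Fin n → ℝ)) (f : (Fin n → ℝ) → ℝ)
    (hA : AssumptionA n Γ f) :
    Γ ⊆ GammaInfty n Γ ∧
    IsOpen (GammaInfty n Γ) ∧
    Convex ℝ (GammaInfty n Γ) ∧
    (∀ x ∈ GammaInfty n Γ, ∀ t : ℝ, 0 < t → t • x ∈ GammaInfty n Γ) ∧
    (∀ x ∈ GammaInfty n Γ, ∀ σ : Equiv.Perm (Fin n), (fun i => x (σ i)) ∈ GammaInfty n Γ) ∧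
    {x : Fin n → ℝ | ∀ i, 0 < x i} ⊆ GammaInfty n Γ ∧
    ((∀ x ∈ GammaInfty n Γ, fInfty n f x = ⊤) ∨
      (∃ g : (Fin n → ℝ) → ℝ, ConcaveOn ℝ (GammaInfty n Γ) g ∧
        ∀ x ∈ GammaInfty n Γ, fInfty n f x = ((g x : ℝ) : EReal))) := by
  have hsub : Γ ⊆ GammaInfty n Γ := by
    intro x hx
    rw [aux_iff hA]
    exact fun i => ⟨x i, by simpa using hx⟩
  refine ⟨hsub, aux_open hA, aux_convex hA, ?_, ?_, hA.orthant_subset.trans hsub, ?_⟩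
  · intro x hx t ht
    rw [aux_iff hA] at hx ⊢
    intro i
    obtain ⟨R, hR⟩ := hx i
    refine ⟨t * R, ?_⟩
    have := aux_comb x x i t 0 R 0
    simp only [zero_smul, add_zero, zero_mul] at this
    rw [this]
    exact hA.cone _ hR t ht
  · intro x hx σ
    rw [aux_iff hA] at hx ⊢
    intro i
    obtain ⟨R, hR⟩ := hx (σ i)
    refine ⟨R, ?_⟩
    convert hA.perm_invariant _ hR σ using 1
    ext j
    by_cases h : j = i
    · subst h; simp
    · simp [h]
  · by_cases hT : ∃ x ∈ GammaInfty n Γ, fInfty n f x = ⊤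
    · obtain ⟨x, hx, hT⟩ := hT
      exact Or.inl fun y hy => aux_top hA hx hy hT
    · push Not at hT
      have hg : ∀ x ∈ GammaInfty n Γ, fInfty n f x = ((fInfty n f x).toReal : EReal) := by
        intro x hx
        refine (EReal.coe_toReal (hT x hx) ?_).symm
        intro hbot
        have := aux_nonneg hA hx
        rw [hbot] at this
        exact absurd this (by simp)
      refine Or.inr ⟨fun x => (fInfty n f x).toReal, ⟨aux_convex hA, ?_⟩, hg⟩
      intro x hx y hy a b ha hb hab
      refine le_of_forall_pos_le_add fun ε hε => ?_
      have h := aux_key hA hx hy ha hb hab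
        (c := (fInfty n f x).toReal - ε) (d := (fInfty n f y).toReal - ε)
        (lt_of_lt_of_eq (EReal.coe_lt_coe_iff.2 (by linarith)) (hg x hx).symm)
        (lt_of_lt_of_eq (EReal.coe_lt_coe_iff.2 (by linarith)) (hg y hy).symm)
      rw [hg _ (aux_convex hA hx hy ha hb hab), EReal.coe_le_coe_iff] at h
      simp only [smul_eq_mul]
      have : a * ε + b * ε = ε := by rw [← add_mul, hab, one_mul]
      nlinarith
end

section
/- Under Assumption (A), suppose Γ_∞ ≠ ℝⁿ. Then for every k ∈ {1,…,n}, Γ_∞ ⊆ {λ ∈ ℝⁿ : Σ_{i≠k} λᵢ > 0}. -/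
open Filter

theorem AssumptionA.add_mem' {n : ℕ} {Γ : Set (Fin n → ℝ)} {f : (Fin n → ℝ) → ℝ}
    (hA : AssumptionA n Γ f) {x y : Fin n → ℝ} (hx : x ∈ Γ) (hy : y ∈ Γ) : x + y ∈ Γ := by
  have h := hA.convex hx hy (a := 1/2) (b := 1/2) (by norm_num) (by norm_num) (by norm_num)
  have h2 := hA.cone _ h 2 (by norm_num)
  convert h2 using 1
  rw [smul_add, smul_smul, smul_smul]
  norm_num

theorem AssumptionA.avg {n : ℕ} {Γ : Set (Fin n → ℝ)} {f : (Fin n → ℝ) → ℝ}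
    (hA : AssumptionA n Γ f) {x : Fin n → ℝ} (hx : x ∈ Γ) (k : Fin n)
    (hs : ∑ i ∈ Finset.univ.erase k, x i ≤ 0) :
    ∃ y ∈ Γ, ∀ i, i ≠ k → y i ≤ 0 := by
  classical
  let S : Finset (Equiv.Perm (Fin n)) := Finset.univ.filter (fun σ => σ k = k)
  have hS : S.Nonempty := ⟨1, by simp [S]⟩
  refine ⟨∑ σ ∈ S, (fun i => x (σ i)), ?_, ?_⟩
  · exact Finset.sum_induction_nonempty _ (fun z => z ∈ Γ)
      (fun a b ha hb => hA.add_mem' ha hb) hS (fun σ _ => hA.perm_invariant x hx σ)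
  · intro i hi
    rw [Finset.sum_apply]
    have hconst : ∀ j ∈ Finset.univ.erase k, ∑ σ ∈ S, x (σ j) = ∑ σ ∈ S, x (σ i) := by
      intro j hj
      have hjk : j ≠ k := (Finset.mem_erase.mp hj).1
      have hsw : Equiv.swap i j k = k := Equiv.swap_apply_of_ne_of_ne hi.symm hjk.symm
      refine Finset.sum_bij' (fun σ _ => σ * Equiv.swap i j) (fun σ _ => σ * Equiv.swap i j)
        ?_ ?_ ?_ ?_ ?_
      · intro σ hσ
        simpa [S, hsw] using hσ
      · intro σ hσ
        simpa [S, hsw] using hσ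
      · intro σ _
        simp [mul_assoc]
      · intro σ _
        simp [mul_assoc]
      · intro σ _
        simp
    have h1 : ∑ j ∈ Finset.univ.erase k, ∑ σ ∈ S, x (σ j) ≤ 0 := by
      rw [Finset.sum_comm]
      refine Finset.sum_nonpos (fun σ hσ => ?_)
      have hk : σ k = k := by simpa [S] using hσ
      have e1 := Finset.add_sum_erase Finset.univ (fun j => x (σ j)) (Finset.mem_univ k)
      have e2 := Finset.add_sum_erase Finset.univ x (Finset.mem_univ k)
      have e3 := Equiv.sum_comp σ x
      simp only [hk] at e1
      linarith
    rw [Finset.sum_congr rfl hconst, Finset.sum_const, nsmul_eq_mul] at h1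
    have hc : 0 < ((Finset.univ.erase k).card : ℝ) := by
      exact_mod_cast Finset.card_pos.mpr ⟨i, by simp [hi]⟩
    by_contra hcon
    push Not at hcon
    exact absurd h1 (not_le.mpr (mul_pos hc hcon))

theorem stmt_12 (n : ℕ) (Γ : Set (Fin n → ℝ)) (f : (Fin n → ℝ) → ℝ)
    (hA : AssumptionA n Γ f)
    (hne : GammaInfty n Γ ≠ Set.univ) :
    ∀ k : Fin n,
      GammaInfty n Γ ⊆ {x : Fin n → ℝ | 0 < ∑ i ∈ Finset.univ.erase k, x i} := by
  intro k x hx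
  by_contra hcon
  simp only [Set.mem_setOf_eq, not_lt] at hcon
  apply hne
  obtain ⟨R₀, hR⟩ := hx k
  have hsum : ∑ i ∈ Finset.univ.erase k, Function.update x k R₀ i ≤ 0 := by
    refine le_trans (le_of_eq (Finset.sum_congr rfl fun i hi => ?_)) hcon
    exact Function.update_of_ne (Finset.mem_erase.mp hi).1 _ _
  obtain ⟨y, hy, hy0⟩ := hA.avg (hR R₀ le_rfl) k hsum
  have hcont : Continuous (fun e : ℝ => (fun i => y i - e : Fin n → ℝ)) := by fun_prop
  have hev : ∀ᶠ e in nhds (0 : ℝ), (fun i => y i - e : Fin n → ℝ) ∈ Γ :=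
    hcont.continuousAt.eventually_mem (hA.isOpen.mem_nhds (by simpa using hy))
  have hev2 : ∀ᶠ e in nhdsWithin (0 : ℝ) (Set.Ioi 0), (fun i => y i - e : Fin n → ℝ) ∈ Γ ∧ 0 < e :=
    (hev.filter_mono nhdsWithin_le_nhds).and self_mem_nhdsWithin
  obtain ⟨e, he, hepos⟩ := hev2.exists
  refine Set.eq_univ_of_forall fun μ i => ?_
  have hw := hA.perm_invariant _ he (Equiv.swap i k)
  set w : Fin n → ℝ := fun j => y (Equiv.swap i k j) - e with hwdef
  have hwneg : ∀ j, j ≠ i → w j < 0 := by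
    intro j hj
    have : Equiv.swap i k j ≠ k := by
      intro h
      apply hj
      have := congrArg (Equiv.swap i k) h
      simpa using this
    have := hy0 _ this
    simp only [hwdef]
    linarith
  have hT : ∀ᶠ t : ℝ in atTop, ∀ j, j ≠ i → t * w j < μ j := by
    refine eventually_all.mpr fun j => ?_
    by_cases hj : j = i
    · simp [hj]
    · have := (tendsto_id.atTop_mul_const_of_neg (hwneg j hj)).eventually_lt_atBot (μ j)
      filter_upwards [this] with t ht _ using ht
  obtain ⟨t, ht, htpos⟩ := (hT.and (eventually_gt_atTop 0)).exists
  refine ⟨t * w i + 1, fun R hRR => ?_⟩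
  have hd : Function.update μ i R - t • w ∈ Γ := by
    apply hA.orthant_subset
    intro j
    by_cases hj : j = i
    · subst hj
      simp only [Pi.sub_apply, Function.update_self, Pi.smul_apply, smul_eq_mul]
      linarith
    · have := ht j hj
      simp only [Pi.sub_apply, Function.update_of_ne hj, Pi.smul_apply, smul_eq_mul]
      linarith
  have := hA.add_mem' (hA.cone w hw t htpos) hd
  simpa using this
end
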